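/- (Stability of persistent entropy.) Let A and B be two finite persistence barcodes with positive total lengths and let 1 ≤ p ≤ ∞. If the relative error r_p(A, B) = 2 n_max^{1 − 1/p} d_p(A, B) / L_max is less than 1/4, then |E(A) − E(B)| ≤ 2 r_p(A,B) · [ log(n_max) − log( 2 r_p(A,B) ) ]. -/

import Mathlib

open Finset

/-- A finite persistence barcode with `n` intervals is given by endpoint functions
`x y : Fin n → ℝ` with `x i ≤ y i` (zero-length intervals serve as padding).
`pcost` is the cost of matching interval `i` of `(xa, ya)` with interval `γ i` of `(xb, yb)`. -/
noncomputable def pcost {n : ℕ} (xa ya xb yb : Fin n → ℝ) (γ : Equiv.Perm (Fin n)) (i : Fin n) : ℝ :=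
  max |xa i - xb (γ i)| |ya i - yb (γ i)|

/-- `p`-th Wasserstein distance between barcodes with `n` intervals each:
`d_p(A,B) = min_γ (Σ_i max{|x_i^a − x_{γ(i)}^b|, |y_i^a − y_{γ(i)}^b|}^p)^(1/p)`. -/
noncomputable def dW {n : ℕ} (p : ℝ) (xa ya xb yb : Fin n → ℝ) : ℝ :=
  (Finset.univ : Finset (Equiv.Perm (Fin n))).inf' Finset.univ_nonempty
    (fun γ => (∑ i, (pcost xa ya xb yb γ i) ^ p) ^ (1 / p))

/-- Bottleneck distance `d_∞(A,B) = min_γ max_i max{|x_i^a − x_{γ(i)}^b|, |y_i^a − y_{γ(i)}^b|}`. -/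
noncomputable def dInf {n : ℕ} (xa ya xb yb : Fin n → ℝ) : ℝ :=
  (Finset.univ : Finset (Equiv.Perm (Fin n))).inf' Finset.univ_nonempty
    (fun γ => ⨆ i, pcost xa ya xb yb γ i)

/-- Total length `L_a = Σ_i (y_i − x_i)` of a barcode. -/
noncomputable def lenSum {n : ℕ} (x y : Fin n → ℝ) : ℝ := ∑ i, (y i - x i)

/-- Persistent entropy `E(A) = −Σ_i (ℓ_i/L) log(ℓ_i/L)` (note `Real.log 0 = 0`,
which realizes the convention `0·log 0 = 0`). -/
noncomputable def pentropy {n : ℕ} (x y : Fin n → ℝ) : ℝ :=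
  -∑ i, ((y i - x i) / lenSum x y) * Real.log ((y i - x i) / lenSum x y)

/-! Dividing its lengths by the total length turns a barcode into a probability vector, and the
persistent entropy is the Shannon entropy of that vector. A matching of total cost `D` moves the
lengths by at most `2 D` in `ℓ¹`, and normalisation at most doubles the `ℓ¹` distance relative to
the larger total length, so the two vectors are within `4 D / L_max ≤ 2 r` of each other; Hölder's
inequality bounds `D` by `n ^ (1 - 1 / p) * d_p`. It remains to estimate the modulus of continuity
of Shannon entropy in `ℓ¹`: on `[0, 1]`, the concave function `η t = -t log t` satisfies
`|η x - η y| ≤ η |x - y|` as soon as `|x - y| ≤ 1 / 2`, and if `n` nonnegative numbers `vᵢ` have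
sum at most `t ≤ n / e`, the tangent to `η` at `t / n` bounds `∑ η vᵢ` by `n * η (t / n)`. -/

section Concave

variable {𝕜 E β : Type*} [Semiring 𝕜] [PartialOrder 𝕜] [AddCommGroup E] [Module 𝕜 E]
  [AddCommMonoid β] [PartialOrder β] [IsOrderedAddMonoid β] [Module 𝕜 β]

theorem concaveOn_add_le_add_of_mem_segment {s : Set E} {f : E → β} (hf : ConcaveOn 𝕜 s f)
    {a b x y : E} (ha : a ∈ s) (hb : b ∈ s) (hx : x ∈ segment 𝕜 a b) (hxy : x + y = a + b) :
    f a + f b ≤ f x + f y := by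
  obtain ⟨u, v, hu, hv, huv, rfl⟩ := hx
  have hy : y = v • a + u • b := by
    rw [← add_right_inj (u • a + v • b), hxy, add_add_add_comm, ← add_smul, ← add_smul,
      add_comm v u, huv, one_smul, one_smul]
  calc f a + f b = (u • f a + v • f b) + (v • f a + u • f b) := by
        rw [add_add_add_comm, ← add_smul, ← add_smul, add_comm v u, huv, one_smul, one_smul]
    _ ≤ f (u • a + v • b) + f y :=
        hy ▸ add_le_add (hf.2 ha hb hu hv huv) (hf.2 ha hb hv hu (add_comm u v ▸ huv))

end Concave

section NegMulLog

open Real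

theorem negMulLog_one_sub_le {v : ℝ} (h0 : 0 ≤ v) (h1 : v ≤ 1 / 2) :
    negMulLog (1 - v) ≤ negMulLog v := by
  rcases h0.eq_or_lt with rfl | h0
  · simp
  have hv : 0 < 1 - v := by linarith
  -- Concavity of `log` at `1 - v = w * v + (1 - w) * 1` with weight `w = v / (1 - v) ≤ 1`.
  have hconc := strictConcaveOn_log_Ioi.concaveOn.2 (Set.mem_Ioi.2 h0) (Set.mem_Ioi.2 one_pos)
    (div_nonneg h0.le hv.le) (sub_nonneg.2 ((div_le_one hv).2 (by linarith)))
    (add_sub_cancel (v / (1 - v)) 1)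
  have hpoint : v / (1 - v) * v + (1 - v / (1 - v)) * 1 = 1 - v := by field_simp; ring
  simp only [smul_eq_mul, hpoint, log_one, mul_zero, add_zero] at hconc
  have hmul : v * log v ≤ (1 - v) * log (1 - v) :=
    calc v * log v = (1 - v) * (v / (1 - v) * log v) := by field_simp
      _ ≤ (1 - v) * log (1 - v) := by gcongr
  simpa only [negMulLog, neg_mul, neg_le_neg_iff] using hmul

theorem abs_negMulLog_sub_negMulLog_le {x y : ℝ} (hx : x ∈ Set.Icc 0 1) (hy : y ∈ Set.Icc 0 1)
    (hxy : |x - y| ≤ 1 / 2) : |negMulLog x - negMulLog y| ≤ negMulLog |x - y| := by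
  wlog hle : y ≤ x generalizing x y
  · rw [abs_sub_comm x y] at hxy ⊢
    rw [abs_sub_comm]
    exact this hy hx hxy (le_of_not_ge hle)
  have hd : 0 ≤ x - y := sub_nonneg.2 hle
  rw [abs_of_nonneg hd] at hxy ⊢
  have hsub : negMulLog 0 + negMulLog x ≤ negMulLog y + negMulLog (x - y) :=
    concaveOn_add_le_add_of_mem_segment concaveOn_negMulLog Set.self_mem_Ici hx.1
      (segment_eq_Icc hx.1 ▸ ⟨hy.1, hle⟩) (by ring)
  have hsup : negMulLog y + negMulLog 1 ≤ negMulLog x + negMulLog (1 - (x - y)) :=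
    concaveOn_add_le_add_of_mem_segment concaveOn_negMulLog hy.1 (Set.mem_Ici.2 zero_le_one)
      (segment_eq_Icc hy.2 ▸ ⟨hle, hx.2⟩) (by ring)
  have hhalf := negMulLog_one_sub_le hd hxy
  rw [negMulLog_zero] at hsub
  rw [negMulLog_one] at hsup
  exact abs_sub_le_iff.2 ⟨by linarith, by linarith⟩

theorem negMulLog_le_tangent {v t : ℝ} (hv : 0 ≤ v) (ht : 0 < t) :
    negMulLog v ≤ v * -log t + (t - v) :=
  calc negMulLog v = negMulLog (t * (v / t)) := by rw [mul_div_cancel₀ v ht.ne']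
    _ = v / t * negMulLog t + t * negMulLog (v / t) := negMulLog_mul _ _
    _ ≤ v / t * negMulLog t + t * (1 - v / t) := by
        gcongr
        exact negMulLog_le_one_sub_self (by positivity)
    _ = v * -log t + (t - v) := by
        rw [negMulLog]
        field_simp

theorem sum_negMulLog_le {ι : Type*} {s : Finset ι} {v : ι → ℝ} {t : ℝ} (hv : ∀ i ∈ s, 0 ≤ v i)
    (hsum : ∑ i ∈ s, v i ≤ t) (ht : t * exp 1 ≤ #s) :
    ∑ i ∈ s, negMulLog (v i) ≤ t * (log #s - log t) := by
  rcases ((sum_nonneg hv).trans hsum).eq_or_lt with rfl | ht0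
  · have hzero := (sum_eq_zero_iff_of_nonneg hv).1 (hsum.antisymm (sum_nonneg hv))
    rw [zero_mul, sum_eq_zero fun i hi => by rw [hzero i hi, negMulLog_zero]]
  have hs : (0 : ℝ) < #s := (by positivity : 0 < t * exp 1).trans_le ht
  have hlog : 1 ≤ log #s - log t := by
    have := log_le_log (by positivity) ht
    rw [log_mul ht0.ne' (exp_pos 1).ne', log_exp] at this
    linarith
  calc ∑ i ∈ s, negMulLog (v i) ≤ ∑ i ∈ s, (v i * -log (t / #s) + (t / #s - v i)) :=
        sum_le_sum fun i hi => negMulLog_le_tangent (hv i hi) (by positivity)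
    _ = (∑ i ∈ s, v i) * (log #s - log t) + (t - ∑ i ∈ s, v i) := by
        rw [sum_add_distrib, sum_sub_distrib, ← sum_mul, sum_const, nsmul_eq_mul,
          mul_div_cancel₀ t hs.ne', log_div ht0.ne' hs.ne', neg_sub]
    _ ≤ t * (log #s - log t) := by
        linarith [mul_nonneg (sub_nonneg.2 hsum) (sub_nonneg.2 hlog)]

theorem abs_sum_negMulLog_sub_sum_negMulLog_le {ι : Type*} [Fintype ι] {a b : ι → ℝ} {t : ℝ}
    (ha : a ∈ stdSimplex ℝ ι) (hb : b ∈ stdSimplex ℝ ι) (hab : ∑ i, |a i - b i| ≤ t)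
    (ht : t ≤ 1 / 2) :
    |∑ i, negMulLog (a i) - ∑ i, negMulLog (b i)| ≤ t * (log (Fintype.card ι) - log t) := by
  have ht0 : 0 ≤ t := (sum_nonneg fun i _ => abs_nonneg _).trans hab
  have hcoord (i : ι) : |a i - b i| ≤ 1 / 2 :=
    (single_le_sum (fun j _ => abs_nonneg (a j - b j)) (mem_univ i)).trans (hab.trans ht)
  cases subsingleton_or_nontrivial ι with
  | inl _ =>
    obtain rfl : a = b := congrArg Subtype.val
      (Subsingleton.elim (⟨a, ha⟩ : stdSimplex ℝ ι) ⟨b, hb⟩)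
    have hcard : log (Fintype.card ι) = 0 := by
      have := Fintype.card_le_one_iff_subsingleton.2 ‹_›
      interval_cases Fintype.card ι <;> simp
    rw [sub_self, abs_zero, hcard, zero_sub]
    exact mul_nonneg ht0 (neg_nonneg.2 (log_nonpos ht0 (by linarith)))
  | inr _ =>
    have hcard : t * exp 1 ≤ Fintype.card ι :=
      calc t * exp 1 ≤ 1 / 2 * 3 := by gcongr; exact exp_one_lt_three.le
        _ ≤ 2 := by norm_num
        _ ≤ Fintype.card ι := mod_cast Fintype.one_lt_card
    calc |∑ i, negMulLog (a i) - ∑ i, negMulLog (b i)|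
        ≤ ∑ i, |negMulLog (a i) - negMulLog (b i)| := by
          rw [← sum_sub_distrib]
          exact abs_sum_le_sum_abs _ _
      _ ≤ ∑ i, negMulLog |a i - b i| := sum_le_sum fun i _ =>
          abs_negMulLog_sub_negMulLog_le (mem_Icc_of_mem_stdSimplex ha i)
            (mem_Icc_of_mem_stdSimplex hb i) (hcoord i)
      _ ≤ t * (log (Fintype.card ι) - log t) :=
          sum_negMulLog_le (fun i _ => abs_nonneg _) hab hcard

end NegMulLog

section Normalization

variable {ι K : Type*} [Field K] [LinearOrder K] [IsStrictOrderedRing K] {s : Finset ι}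
  {a b : ι → K}

theorem sum_abs_div_sum_sub_div_sum_le (hb : ∀ i ∈ s, 0 ≤ b i) (hA : 0 < ∑ i ∈ s, a i)
    (hB : 0 < ∑ i ∈ s, b i) :
    ∑ i ∈ s, |a i / ∑ j ∈ s, a j - b i / ∑ j ∈ s, b j| ≤
      2 * (∑ i ∈ s, |a i - b i|) / ∑ i ∈ s, a i := by
  set A := ∑ i ∈ s, a i with hAdef
  set B := ∑ i ∈ s, b i with hBdef
  have hAB : |B - A| ≤ ∑ i ∈ s, |a i - b i| := by
    rw [abs_sub_comm, hAdef, hBdef, ← sum_sub_distrib]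
    exact abs_sum_le_sum_abs _ _
  have hterm (i : ι) (hi : i ∈ s) :
      |a i / A - b i / B| ≤ |a i - b i| / A + b i * (|B - A| / (A * B)) :=
    calc |a i / A - b i / B| = |(a i - b i) / A + b i * ((B - A) / (A * B))| := by
          congr 1
          field_simp
          ring
      _ ≤ |(a i - b i) / A| + |b i * ((B - A) / (A * B))| := abs_add_le _ _
      _ = |a i - b i| / A + b i * (|B - A| / (A * B)) := by
          rw [abs_div, abs_mul, abs_div, abs_of_pos hA, abs_of_nonneg (hb i hi),
            abs_of_pos (mul_pos hA hB)]
  calc ∑ i ∈ s, |a i / A - b i / B|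
      ≤ ∑ i ∈ s, (|a i - b i| / A + b i * (|B - A| / (A * B))) := sum_le_sum hterm
    _ = ((∑ i ∈ s, |a i - b i|) + |B - A|) / A := by
        rw [sum_add_distrib, ← sum_mul, ← sum_div, ← hBdef]
        field_simp
    _ ≤ 2 * (∑ i ∈ s, |a i - b i|) / A := by
        rw [two_mul]
        gcongr

theorem sum_abs_div_sum_sub_div_sum_le_max (ha : ∀ i ∈ s, 0 ≤ a i) (hb : ∀ i ∈ s, 0 ≤ b i)
    (hA : 0 < ∑ i ∈ s, a i) (hB : 0 < ∑ i ∈ s, b i) :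
    ∑ i ∈ s, |a i / ∑ j ∈ s, a j - b i / ∑ j ∈ s, b j| ≤
      2 * (∑ i ∈ s, |a i - b i|) / max (∑ i ∈ s, a i) (∑ i ∈ s, b i) := by
  rcases le_total (∑ i ∈ s, b i) (∑ i ∈ s, a i) with h | h
  · rw [max_eq_left h]
    exact sum_abs_div_sum_sub_div_sum_le hb hA hB
  · rw [max_eq_right h]
    simpa only [abs_sub_comm] using sum_abs_div_sum_sub_div_sum_le ha hB hA

end Normalization

theorem sum_abs_le_card_rpow_mul_Lp {ι : Type*} (s : Finset ι) (f : ι → ℝ) {p : ℝ} (hp : 1 ≤ p) :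
    ∑ i ∈ s, |f i| ≤ (#s : ℝ) ^ (1 - 1 / p) * (∑ i ∈ s, |f i| ^ p) ^ (1 / p) := by
  simpa using Real.inner_le_weight_mul_Lp_of_nonneg s hp (fun _ => 1) (fun i => |f i|)
    (fun _ => zero_le_one) fun _ => abs_nonneg _

section Barcode

variable {n : ℕ}

/-- The relative lengths `ℓ_i / L` of the intervals of a barcode: the probability vector whose
Shannon entropy is the persistent entropy. -/
noncomputable def relLength (x y : Fin n → ℝ) (i : Fin n) : ℝ :=
  (y i - x i) / lenSum x y

theorem relLength_mem_stdSimplex {x y : Fin n → ℝ} (hxy : ∀ i, x i ≤ y i) (hL : 0 < lenSum x y) :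
    relLength x y ∈ stdSimplex ℝ (Fin n) :=
  ⟨fun i => div_nonneg (sub_nonneg.2 (hxy i)) hL.le, by
    simp only [relLength]
    rw [← sum_div]
    exact div_self hL.ne'⟩

theorem pentropy_eq_sum_negMulLog (x y : Fin n → ℝ) :
    pentropy x y = ∑ i, Real.negMulLog (relLength x y i) := by
  simp only [pentropy, relLength, Real.negMulLog, neg_mul, sum_neg_distrib]

theorem lenSum_comp_perm (x y : Fin n → ℝ) (γ : Equiv.Perm (Fin n)) :
    lenSum (x ∘ γ) (y ∘ γ) = lenSum x y :=
  Equiv.sum_comp γ fun i => y i - x i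

theorem pentropy_comp_perm (x y : Fin n → ℝ) (γ : Equiv.Perm (Fin n)) :
    pentropy (x ∘ γ) (y ∘ γ) = pentropy x y := by
  simp only [pentropy, lenSum_comp_perm]
  exact congrArg Neg.neg (Equiv.sum_comp γ fun i =>
    (y i - x i) / lenSum x y * Real.log ((y i - x i) / lenSum x y))

variable {xa ya xb yb : Fin n → ℝ}

theorem pcost_nonneg (γ : Equiv.Perm (Fin n)) (i : Fin n) : 0 ≤ pcost xa ya xb yb γ i :=
  (abs_nonneg _).trans (le_max_left _ _)

theorem abs_length_sub_length_le_two_mul_pcost (γ : Equiv.Perm (Fin n)) (i : Fin n) :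
    |(ya i - xa i) - (yb (γ i) - xb (γ i))| ≤ 2 * pcost xa ya xb yb γ i :=
  calc |(ya i - xa i) - (yb (γ i) - xb (γ i))|
      = |(ya i - yb (γ i)) - (xa i - xb (γ i))| := by rw [sub_sub_sub_comm]
    _ ≤ |ya i - yb (γ i)| + |xa i - xb (γ i)| := abs_sub _ _
    _ ≤ 2 * pcost xa ya xb yb γ i := by
        rw [two_mul]
        exact add_le_add (le_max_right _ _) (le_max_left _ _)

theorem sum_abs_relLength_sub_relLength_le (hA : ∀ i, xa i ≤ ya i) (hB : ∀ i, xb i ≤ yb i)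
    (hLa : 0 < lenSum xa ya) (hLb : 0 < lenSum xb yb) (γ : Equiv.Perm (Fin n)) :
    ∑ i, |relLength xa ya i - relLength (xb ∘ γ) (yb ∘ γ) i| ≤
      2 * (2 * (∑ i, pcost xa ya xb yb γ i) / max (lenSum xa ya) (lenSum xb yb)) := by
  rw [← lenSum_comp_perm xb yb γ] at hLb ⊢
  have hlength : ∑ i, |(ya i - xa i) - (yb (γ i) - xb (γ i))| ≤ 2 * ∑ i, pcost xa ya xb yb γ i := by
    rw [mul_sum]
    exact sum_le_sum fun i _ => abs_length_sub_length_le_two_mul_pcost γ i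
  calc ∑ i, |relLength xa ya i - relLength (xb ∘ γ) (yb ∘ γ) i|
      ≤ 2 * (∑ i, |(ya i - xa i) - (yb (γ i) - xb (γ i))|) /
          max (lenSum xa ya) (lenSum (xb ∘ γ) (yb ∘ γ)) :=
        sum_abs_div_sum_sub_div_sum_le_max (fun i _ => sub_nonneg.2 (hA i))
          (fun i _ => sub_nonneg.2 (hB (γ i))) hLa hLb
    _ ≤ 2 * (2 * ∑ i, pcost xa ya xb yb γ i) /
          max (lenSum xa ya) (lenSum (xb ∘ γ) (yb ∘ γ)) := by
        gcongr
    _ = 2 * (2 * (∑ i, pcost xa ya xb yb γ i) /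
          max (lenSum xa ya) (lenSum (xb ∘ γ) (yb ∘ γ))) := mul_div_assoc _ _ _

theorem abs_pentropy_sub_pentropy_le (hA : ∀ i, xa i ≤ ya i) (hB : ∀ i, xb i ≤ yb i)
    (hLa : 0 < lenSum xa ya) (hLb : 0 < lenSum xb yb) (γ : Equiv.Perm (Fin n)) {r : ℝ}
    (hγ : 2 * (∑ i, pcost xa ya xb yb γ i) / max (lenSum xa ya) (lenSum xb yb) ≤ r)
    (hr : r ≤ 1 / 4) :
    |pentropy xa ya - pentropy xb yb| ≤ 2 * r * (Real.log n - Real.log (2 * r)) := by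
  have hdist : ∑ i, |relLength xa ya i - relLength (xb ∘ γ) (yb ∘ γ) i| ≤ 2 * r :=
    (sum_abs_relLength_sub_relLength_le hA hB hLa hLb γ).trans (by gcongr)
  have hr2 : 2 * r ≤ 1 / 2 := by linarith
  have hBγ : ∀ i, (xb ∘ γ) i ≤ (yb ∘ γ) i := fun i => hB (γ i)
  rw [← lenSum_comp_perm xb yb γ] at hLb
  have hentropy := abs_sum_negMulLog_sub_sum_negMulLog_le (relLength_mem_stdSimplex hA hLa)
    (relLength_mem_stdSimplex hBγ hLb) hdist hr2
  rwa [← pentropy_eq_sum_negMulLog, ← pentropy_eq_sum_negMulLog, Fintype.card_fin,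
    pentropy_comp_perm] at hentropy

theorem exists_perm_sum_pcost_le_dW (xa ya xb yb : Fin n → ℝ) {p : ℝ} (hp : 1 ≤ p) :
    ∃ γ, ∑ i, pcost xa ya xb yb γ i ≤ (n : ℝ) ^ (1 - 1 / p) * dW p xa ya xb yb := by
  obtain ⟨γ, -, hγ⟩ := exists_mem_eq_inf' univ_nonempty
    fun γ : Equiv.Perm (Fin n) => (∑ i, pcost xa ya xb yb γ i ^ p) ^ (1 / p)
  refine ⟨γ, ?_⟩
  rw [dW, hγ]
  simpa only [abs_of_nonneg (pcost_nonneg γ _), card_univ, Fintype.card_fin] using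
    sum_abs_le_card_rpow_mul_Lp univ (pcost xa ya xb yb γ) hp

theorem exists_perm_sum_pcost_le_dInf (xa ya xb yb : Fin n → ℝ) :
    ∃ γ, ∑ i, pcost xa ya xb yb γ i ≤ n * dInf xa ya xb yb := by
  obtain ⟨γ, -, hγ⟩ := exists_mem_eq_inf' univ_nonempty
    fun γ : Equiv.Perm (Fin n) => ⨆ i, pcost xa ya xb yb γ i
  refine ⟨γ, ?_⟩
  rw [dInf, hγ]
  simpa only [card_univ, Fintype.card_fin, nsmul_eq_mul] using
    sum_le_card_nsmul univ _ _ fun i _ => Finite.le_ciSup (pcost xa ya xb yb γ) i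

end Barcode

/-- Stability of persistent entropy: if the relative error
`r_p(A,B) = 2·n_max^(1−1/p)·d_p(A,B)/L_max` is less than `1/4` then
`|E(A) − E(B)| ≤ 2 r_p(A,B)·[log(n_max) − log(2 r_p(A,B))]`; for `p = ∞` read
`n_max^(1−1/p) = n_max`.  (When `r_p = 0`, both `Real.log 0 = 0` and the bound is `0`.) -/
theorem pentropy_stability {n : ℕ} (xa ya xb yb : Fin n → ℝ)
    (hA : ∀ i, xa i ≤ ya i) (hB : ∀ i, xb i ≤ yb i)
    (hLa : 0 < lenSum xa ya) (hLb : 0 < lenSum xb yb) :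
    (∀ p : ℝ, 1 ≤ p → ∀ r : ℝ,
      r = 2 * (n : ℝ) ^ (1 - 1 / p) * dW p xa ya xb yb / max (lenSum xa ya) (lenSum xb yb) →
      r < 1 / 4 →
      |pentropy xa ya - pentropy xb yb| ≤ 2 * r * (Real.log n - Real.log (2 * r))) ∧
    (∀ r : ℝ,
      r = 2 * (n : ℝ) * dInf xa ya xb yb / max (lenSum xa ya) (lenSum xb yb) →
      r < 1 / 4 →
      |pentropy xa ya - pentropy xb yb| ≤ 2 * r * (Real.log n - Real.log (2 * r))) := by
  refine ⟨fun p hp r hr hr4 => ?_, fun r hr hr4 => ?_⟩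
  · obtain ⟨γ, hγ⟩ := exists_perm_sum_pcost_le_dW xa ya xb yb hp
    refine abs_pentropy_sub_pentropy_le hA hB hLa hLb γ ?_ hr4.le
    rw [hr, mul_assoc]
    gcongr
  · obtain ⟨γ, hγ⟩ := exists_perm_sum_pcost_le_dInf xa ya xb yb
    refine abs_pentropy_sub_pentropy_le hA hB hLa hLb γ ?_ hr4.le
    rw [hr, mul_assoc]
    gcongr
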